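/- Let J₀ be a two-sided p-periodic Jacobi matrix with all gaps open, and let c : {(a,b) ∈ ℝ^p × ℝ^p : a_j > 0 for all j} → ℝ^{p+1} be the map sending (a,b) to the vector of coefficients of the degree-p discriminant polynomial Δ_{(a,b)} (this map is smooth on its domain). Then at every point (a,b) of the isospectral torus T_{J₀}, viewed as a subset of ℝ^{2p} via one period, the derivative Dc(a,b) : ℝ^{2p} → ℝ^{p+1} is surjective; equivalently, the gradients of the p+1 coefficients of Δ_{(a,b)} are linearly independent at (a,b), and hence span the (p+1)-dimensional normal space to T_{J₀} there. -/

import Mathlib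

open scoped ComplexConjugate

noncomputable section

/-- The transfer matrix `Λ_n(x) = (1/a_n)·[[x − b_n, −1], [a_n², 0]]`. -/
def lamMat (a b : ℤ → ℝ) (n : ℤ) : Matrix (Fin 2) (Fin 2) (Polynomial ℝ) :=
  Polynomial.C (a n)⁻¹ • !![Polynomial.X - Polynomial.C (b n), -1;
    Polynomial.C ((a n) ^ 2), 0]

/-- The ordered product `Λ_n ⋯ Λ_2 Λ_1`. -/
def tMat (a b : ℤ → ℝ) : ℕ → Matrix (Fin 2) (Fin 2) (Polynomial ℝ)
  | 0 => 1
  | n + 1 => lamMat a b ((n : ℤ) + 1) * tMat a b n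

/-- The discriminant `Δ_{(a,b)}(x) = Tr(Λ_p(x) ⋯ Λ_1(x))`. -/
def disc (a b : ℤ → ℝ) (p : ℕ) : Polynomial ℝ := Matrix.trace (tMat a b p)

/-- Membership in the isospectral torus. -/
def InTorus (p : ℕ) (a0 b0 a' b' : ℤ → ℝ) : Prop :=
  (∀ n, 0 < a' n) ∧ Function.Periodic a' (p : ℤ) ∧ Function.Periodic b' (p : ℤ) ∧
    disc a' b' p = disc a0 b0 p

/-- All gaps open: `Δ'(x) ≠ 0` whenever `Δ(x) = ±2` (equivalently, every zero of
`Δ² − 4` is simple). -/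
def AllGapsOpen (a0 b0 : ℤ → ℝ) (p : ℕ) : Prop :=
  ∀ x : ℝ, ((disc a0 b0 p).eval x = 2 ∨ (disc a0 b0 p).eval x = -2) →
    (Polynomial.derivative (disc a0 b0 p)).eval x ≠ 0

/-- Periodic extension: `(pext v)_n = v_{(n−1) mod p}`, so that sites `1,…,p`
carry `v_0,…,v_{p−1}`. -/
def pext {p : ℕ} (v : Fin p → ℝ) : ℤ → ℝ := fun n =>
  if h : 0 < p then
    v ⟨((n - 1) % (p : ℤ)).toNat, by
      have hp' : (0 : ℤ) < (p : ℤ) := by exact_mod_cast h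
      have h1 : 0 ≤ (n - 1) % (p : ℤ) := Int.emod_nonneg _ (ne_of_gt hp')
      have h2 : (n - 1) % (p : ℤ) < (p : ℤ) := Int.emod_lt_of_pos _ hp'
      omega⟩
  else 0

/-- The map sending one period of Jacobi parameters to the `p+1` coefficients of
the discriminant polynomial. -/
def coeffMap (p : ℕ) (vw : (Fin p → ℝ) × (Fin p → ℝ)) : Fin (p + 1) → ℝ :=
  fun i => (disc (pext vw.1) (pext vw.2) p).coeff i

/-!
Let `M_j = Λ_{j+p} ⋯ Λ_{j+1}` be the monodromy matrix at the site `j`, with upper right entry `β_j`,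
lower left entry `γ_j` and difference of diagonal entries `η_j`. Since `Δ = tr M_j`, one finds
`∂Δ/∂b_j = β_{j-1}` and `∂Δ/∂a_j = -η_j / a_j`, so the claim is that the span `V` of all `β_j` and
`η_j` consists of all polynomials of degree at most `p`. Comparing the entries in
`M_j Λ_j = Λ_j M_{j-1}` shows that `γ_j`, `X β_j`, `X η_j + X² β_j` and `X η_j - X η_{j-1}` all lie
in `V`. As `X² β_0` lies in the ideal `(β_0)`, all `X η_j` lie in `V + (β_0)`, which is therefore
stable under multiplication by `X`, that is, an ideal. It contains `β_0`, `γ_0` and `η_0`. A common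
zero of these is real by Green's formula, and `det M_0 = 1` makes it a closed gap, so the ideal is
everything. As `β_0` has degree `p - 1` and `β_0`, `X β_0` are in `V`, so is every polynomial of
degree at most `p`.
-/

section Transfer

open Polynomial

lemma C_mul_self_mul_C_inv {K : Type*} [Field K] (x : K) : (C x * C x * C x⁻¹ : K[X]) = C x := by
  rw [← C_mul, ← C_mul, mul_self_mul_inv]

variable (a b : ℤ → ℝ)

lemma lamMat_eq (n : ℤ) :
    lamMat a b n = !![C (a n)⁻¹ * (X - C (b n)), -C (a n)⁻¹; C (a n), 0] := by
  have h : (C (a n)⁻¹ * C (a n ^ 2) : ℝ[X]) = C (a n) := by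
    rw [C_pow, sq, mul_comm, C_mul_self_mul_C_inv]
  simp [lamMat, Matrix.smul_of, Matrix.smul_cons, -map_pow, h]

lemma det_lamMat {n : ℤ} (h : a n ≠ 0) : (lamMat a b n).det = 1 := by
  simp [lamMat_eq, Matrix.det_fin_two, ← C_mul, h]

lemma lamMat_mul_apply_zero (n : ℤ) (M : Matrix (Fin 2) (Fin 2) ℝ[X]) (c : Fin 2) :
    (lamMat a b n * M) 0 c = C (a n)⁻¹ * ((X - C (b n)) * M 0 c - M 1 c) := by
  simp only [lamMat_eq, Matrix.mul_apply, Fin.sum_univ_two, Matrix.of_apply, Matrix.cons_val_zero,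
    Matrix.cons_val_one, Matrix.cons_val']
  ring

lemma lamMat_mul_apply_one (n : ℤ) (M : Matrix (Fin 2) (Fin 2) ℝ[X]) (c : Fin 2) :
    (lamMat a b n * M) 1 c = C (a n) * M 0 c := by
  simp [lamMat_eq, Matrix.mul_apply, Fin.sum_univ_two]

lemma mul_lamMat_apply_zero (n : ℤ) (M : Matrix (Fin 2) (Fin 2) ℝ[X]) (r : Fin 2) :
    (M * lamMat a b n) r 0 = C (a n)⁻¹ * (X - C (b n)) * M r 0 + C (a n) * M r 1 := by
  simp only [lamMat_eq, Matrix.mul_apply, Fin.sum_univ_two, Matrix.of_apply, Matrix.cons_val_zero,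
    Matrix.cons_val_one, Matrix.cons_val']
  ring

lemma mul_lamMat_apply_one (n : ℤ) (M : Matrix (Fin 2) (Fin 2) ℝ[X]) (r : Fin 2) :
    (M * lamMat a b n) r 1 = -(C (a n)⁻¹ * M r 0) := by
  simp [lamMat_eq, Matrix.mul_apply, Fin.sum_univ_two, mul_comm]

lemma det_tMat {a : ℤ → ℝ} (ha : ∀ n, a n ≠ 0) (n : ℕ) : (tMat a b n).det = 1 := by
  induction n with
  | zero => simp [tMat]
  | succ n ih => rw [tMat, Matrix.det_mul, ih, det_lamMat a b (ha _), one_mul]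

lemma tMat_congr {a b a' b' : ℤ → ℝ} {n : ℕ}
    (h : ∀ k : ℤ, 0 < k → k ≤ n → a k = a' k ∧ b k = b' k) : tMat a b n = tMat a' b' n := by
  induction n with
  | zero => rfl
  | succ n ih =>
    obtain ⟨ha, hb⟩ := h (n + 1) (by omega) (by omega)
    rw [tMat, tMat, ih fun k hk hkn => h k hk (by omega), lamMat, lamMat, ha, hb]

lemma tMat_succ_eq_mul_lamMat_one (n : ℕ) :
    tMat a b (n + 1) = tMat (fun k => a (k + 1)) (fun k => b (k + 1)) n * lamMat a b 1 := by
  induction n with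
  | zero => simp [tMat]
  | succ n ih => rw [tMat, ih, tMat, ← Matrix.mul_assoc]; simp [lamMat]

lemma natDegree_tMat_apply_le (n : ℕ) (i c : Fin 2) : (tMat a b n i c).natDegree ≤ n := by
  induction n generalizing i with
  | zero => fin_cases i <;> fin_cases c <;> simp [tMat]
  | succ n ih =>
    have h_shift : ((X - C (b (n + 1))) * tMat a b n 0 c).natDegree ≤ n + 1 :=
      natDegree_mul_le.trans (by rw [natDegree_X_sub_C]; linarith [ih 0])
    fin_cases i
    · simp only [Fin.zero_eta, tMat, lamMat_mul_apply_zero]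
      exact (natDegree_C_mul_le _ _).trans
        ((natDegree_sub_le_of_le h_shift ((ih 1).trans n.le_succ)).trans_eq (max_self _))
    · simp only [Fin.mk_one, tMat, lamMat_mul_apply_one]
      exact (natDegree_C_mul_le _ _).trans ((ih 0).trans n.le_succ)

lemma degree_tMat_zero_zero_and_degree_tMat_one_zero_lt {a : ℤ → ℝ} (ha : ∀ n, a n ≠ 0) (n : ℕ) :
    (tMat a b n 0 0).degree = n ∧ (tMat a b n 1 0).degree < n := by
  induction n with
  | zero => simp [tMat]
  | succ n ih =>
    have h_lt : ((n : ℕ) : WithBot ℕ) < ((n + 1 : ℕ) : WithBot ℕ) := by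
      exact_mod_cast n.lt_succ_self
    have h_shift : ((X - C (b (n + 1))) * tMat a b n 0 0).degree = ((n + 1 : ℕ) : WithBot ℕ) := by
      rw [degree_mul, degree_X_sub_C, ih.1, add_comm, Nat.cast_succ]
    constructor
    · rw [tMat, lamMat_mul_apply_zero, degree_C_mul (inv_ne_zero (ha _)),
        degree_sub_eq_left_of_degree_lt (by rw [h_shift]; exact ih.2.trans h_lt), h_shift]
    · rw [tMat, lamMat_mul_apply_one, degree_C_mul (ha _), ih.1]
      exact h_lt

/-- Green's formula for the solution of the three-term recursion with initial data `(1, 0)`. -/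
lemma im_conj_tMat_mul_tMat {a : ℤ → ℝ} (ha : ∀ n, a n ≠ 0) (z : ℂ) (n : ℕ) :
    (conj (aeval z (tMat a b n 0 0)) * aeval z (tMat a b n 1 0)).im =
      -z.im * ∑ i ∈ Finset.range n, Complex.normSq (aeval z (tMat a b i 0 0)) := by
  induction n with
  | zero => simp [tMat]
  | succ n ih =>
    rw [Finset.sum_range_succ, mul_add, ← ih, tMat, lamMat_mul_apply_zero, lamMat_mul_apply_one]
    have ha_succ := ha (n + 1)
    simp only [map_mul, map_sub, aeval_C, aeval_X]
    generalize aeval z (tMat a b n 1 0) = t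
    generalize aeval z (tMat a b n 0 0) = s
    simp [Complex.normSq_apply, ← Complex.ofReal_inv]
    field_simp
    ring

lemma im_eq_zero_of_aeval_tMat_one_zero {a : ℤ → ℝ} (ha : ∀ n, a n ≠ 0) {n : ℕ} (hn : n ≠ 0)
    {z : ℂ} (hz : aeval z (tMat a b n 1 0) = 0) : z.im = 0 := by
  have h_pos : 0 < ∑ i ∈ Finset.range n, Complex.normSq (aeval z (tMat a b i 0 0)) :=
    Finset.sum_pos' (fun _ _ => Complex.normSq_nonneg _)
      ⟨0, Finset.mem_range.2 hn.bot_lt, by simp [tMat]⟩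
  have h_green := im_conj_tMat_mul_tMat b ha z n
  rw [hz, mul_zero, Complex.zero_im] at h_green
  simpa [h_pos.ne'] using h_green.symm

lemma differentiableAt_coeff_tMat {E : Type*} [NormedAddCommGroup E] [NormedSpace ℝ E]
    {a b : E → ℤ → ℝ} {e : E} (ha : ∀ k, DifferentiableAt ℝ (fun x => a x k) e)
    (hb : ∀ k, DifferentiableAt ℝ (fun x => b x k) e) (ha0 : ∀ k, a e k ≠ 0)
    (n : ℕ) (i c : Fin 2) (m : ℕ) :
    DifferentiableAt ℝ (fun x => (tMat (a x) (b x) n i c).coeff m) e := by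
  induction n generalizing i m with
  | zero => simp only [tMat, differentiableAt_const]
  | succ n ih =>
    fin_cases i
    · simp only [Fin.zero_eta, tMat, lamMat_mul_apply_zero, coeff_C_mul, sub_mul, coeff_sub]
      have h_X : DifferentiableAt ℝ (fun x => (X * tMat (a x) (b x) n 0 c).coeff m) e := by
        cases m with
        | zero => simp
        | succ m => simpa only [coeff_X_mul] using ih 0 m
      exact ((ha _).inv (ha0 _)).mul ((h_X.sub ((hb _).mul (ih 0 m))).sub (ih 1 m))
    · simp only [Fin.mk_one, tMat, lamMat_mul_apply_one, coeff_C_mul]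
      exact (ha _).mul (ih 0 m)

end Transfer

section Polynomials

open Polynomial

lemma ideal_eq_top_of_forall_exists_aeval_ne_zero {k : Type*} (K : Type*) [Field k] [Field K]
    [IsAlgClosed K] [Algebra k K] {I : Ideal k[X]} (h : ∀ z : K, ∃ f ∈ I, aeval z f ≠ 0) :
    I = ⊤ := by
  obtain ⟨g, rfl⟩ := IsPrincipalIdealRing.principal I
  by_contra h_ne
  have h_deg : g.degree ≠ 0 := fun h0 =>
    h_ne (Ideal.span_singleton_eq_top.2 (isUnit_iff_degree_eq_zero.2 h0))
  obtain ⟨z, hz⟩ := IsAlgClosed.exists_aeval_eq_zero K g h_deg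
  obtain ⟨f, hf, hfz⟩ := h z
  obtain ⟨c, rfl⟩ := Ideal.mem_span_singleton.1 hf
  exact hfz (by rw [map_mul, hz, zero_mul])

lemma mul_mem_of_forall_X_mul_mem {R : Type*} [CommSemiring R] {W : Submodule R R[X]}
    (hW : ∀ f ∈ W, X * f ∈ W) (g : R[X]) {f : R[X]} (hf : f ∈ W) : g * f ∈ W := by
  induction g using Polynomial.induction_on with
  | C c => exact smul_eq_C_mul (p := f) c ▸ W.smul_mem c hf
  | add g₁ g₂ h₁ h₂ => exact add_mul g₁ g₂ f ▸ W.add_mem h₁ h₂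
  | monomial n c h =>
    rw [pow_succ', mul_left_comm, mul_assoc]
    exact hW _ h

lemma eval_trace_of_det_eq_one {R : Type*} [CommRing R] [IsDomain R]
    {M : Matrix (Fin 2) (Fin 2) R[X]} (hdet : M.det = 1) {x : R} (h01 : (M 0 1).eval x = 0)
    (h10 : (M 1 0).eval x = 0) (hdiag : (M 0 0).eval x = (M 1 1).eval x) :
    (M.trace.eval x = 2 ∨ M.trace.eval x = -2) ∧ (derivative M.trace).eval x = 0 := by
  rw [Matrix.det_fin_two] at hdet
  have h_sq : (M 1 1).eval x * (M 1 1).eval x = 1 := by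
    simpa [h01, hdiag] using congrArg (eval x) hdet
  have h_deriv : (M 1 1).eval x * (derivative M.trace).eval x = 0 := by
    have := congrArg (fun f => (derivative f).eval x) hdet
    simp only [derivative_sub, derivative_mul, eval_sub, eval_add, eval_mul, h01, h10, hdiag,
      derivative_one, eval_zero] at this
    rw [Matrix.trace_fin_two, derivative_add, eval_add]
    linear_combination this
  refine ⟨?_, (mul_eq_zero.1 h_deriv).resolve_left (left_ne_zero_of_mul_eq_one h_sq)⟩
  rw [Matrix.trace_fin_two, eval_add, hdiag]
  exact (mul_self_eq_one_iff.1 h_sq).imp (fun h => by rw [h]; norm_num)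
    (fun h => by rw [h]; norm_num)

end Polynomials

section Monodromy

open Polynomial

/-- The monodromy matrix `M_j = Λ_{j+p} ⋯ Λ_{j+1}` of a `p`-periodic Jacobi matrix, based at the
site `j`. -/
def monodromy (a b : ℤ → ℝ) (p : ℕ) (j : ℤ) : Matrix (Fin 2) (Fin 2) ℝ[X] :=
  tMat (fun n => a (n + j)) (fun n => b (n + j)) p

/-- The product `Λ_{j+p-1} ⋯ Λ_{j+1}` over one period with the site `j` left out; it carries the
dependence of the discriminant on the parameters at all other sites. -/
def cutMonodromy (a b : ℤ → ℝ) (p : ℕ) (j : ℤ) : Matrix (Fin 2) (Fin 2) ℝ[X] :=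
  tMat (fun n => a (n + j)) (fun n => b (n + j)) (p - 1)

/-- The difference `η_j` of the diagonal entries of the monodromy matrix; together with the
off-diagonal entries it determines the traceless part of that matrix. -/
def diagDiff (a b : ℤ → ℝ) (p : ℕ) (j : ℤ) : ℝ[X] :=
  monodromy a b p j 0 0 - monodromy a b p j 1 1

/-- The span of the polynomials `monodromy a b p j 0 1` and `diagDiff a b p j`, which up to nonzero
factors are the partial derivatives of the discriminant with respect to `b_{j+1}` and `a_j`. -/
def gradientSpan (a b : ℤ → ℝ) (p : ℕ) : Submodule ℝ ℝ[X] :=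
  Submodule.span ℝ
    (Set.range (fun j => monodromy a b p j 0 1) ∪ Set.range (fun j => diagDiff a b p j))

variable {a b : ℤ → ℝ} {p : ℕ}

lemma monodromy_zero : monodromy a b p 0 = tMat a b p := by
  simp [monodromy]

lemma monodromy_sub_one_eq (hp : 0 < p) (j : ℤ) :
    monodromy a b p (j - 1) = cutMonodromy a b p j * lamMat a b j := by
  obtain ⟨q, rfl⟩ := Nat.exists_eq_succ_of_ne_zero hp.ne'
  rw [monodromy, tMat_succ_eq_mul_lamMat_one]
  simp [cutMonodromy, lamMat, add_assoc]

lemma monodromy_eq (ha : Function.Periodic a p) (hb : Function.Periodic b p) (hp : 0 < p) (j : ℤ) :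
    monodromy a b p j = lamMat a b j * cutMonodromy a b p j := by
  obtain ⟨q, rfl⟩ := Nat.exists_eq_succ_of_ne_zero hp.ne'
  have ha_j := ha j
  have hb_j := hb j
  push_cast at ha_j hb_j
  rw [monodromy, tMat]
  simp [cutMonodromy, lamMat, add_comm _ j, ha_j, hb_j]

lemma trace_monodromy (ha : Function.Periodic a p) (hb : Function.Periodic b p) (hp : 0 < p)
    (j : ℤ) : (monodromy a b p j).trace = disc a b p := by
  have h_step (i : ℤ) : (monodromy a b p (i - 1)).trace = (monodromy a b p i).trace := by
    rw [monodromy_eq ha hb hp i, monodromy_sub_one_eq hp, Matrix.trace_mul_comm]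
  induction j using Int.induction_on with
  | zero => rw [monodromy_zero, disc]
  | succ i ih => rw [← h_step, add_sub_cancel_right, ih]
  | pred i ih => rw [h_step, ih]

lemma monodromy_one_zero (ha : Function.Periodic a p) (hb : Function.Periodic b p) (hp : 0 < p)
    (j : ℤ) : monodromy a b p j 1 0 = -(C (a j) ^ 2 * monodromy a b p (j - 1) 0 1) := by
  rw [monodromy_eq ha hb hp, monodromy_sub_one_eq hp, lamMat_mul_apply_one, mul_lamMat_apply_one]
  linear_combination -cutMonodromy a b p j 0 0 * C_mul_self_mul_C_inv (a j)

lemma diagDiff_add_diagDiff_sub_one (ha : Function.Periodic a p) (hb : Function.Periodic b p)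
    (hp : 0 < p) (j : ℤ) :
    diagDiff a b p j + diagDiff a b p (j - 1) =
      -(2 * (X - C (b j)) * monodromy a b p (j - 1) 0 1) := by
  rw [diagDiff, diagDiff, monodromy_eq ha hb hp j, monodromy_sub_one_eq hp]
  simp only [lamMat_mul_apply_zero, lamMat_mul_apply_one, mul_lamMat_apply_zero,
    mul_lamMat_apply_one]
  ring

lemma sq_mul_monodromy_zero_one (ha : Function.Periodic a p) (hb : Function.Periodic b p)
    (hp : 0 < p) (j : ℤ) :
    C (a j) ^ 2 * monodromy a b p j 0 1 = (X - C (b j)) * diagDiff a b p (j - 1) -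
      monodromy a b p (j - 1) 1 0 + (X - C (b j)) ^ 2 * monodromy a b p (j - 1) 0 1 := by
  rw [monodromy_eq ha hb hp j, diagDiff, monodromy_sub_one_eq hp]
  simp only [lamMat_mul_apply_zero, mul_lamMat_apply_zero, mul_lamMat_apply_one]
  linear_combination
    ((X - C (b j)) * cutMonodromy a b p j 0 1 - cutMonodromy a b p j 1 1) *
      C_mul_self_mul_C_inv (a j)

lemma degree_monodromy_zero_one (ha0 : ∀ n, a n ≠ 0) (hp : 0 < p) (j : ℤ) :
    (monodromy a b p j 0 1).degree = (p - 1 : ℕ) := by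
  have h_entry : monodromy a b p j 0 1 =
      C (-(a (j + 1))⁻¹) * cutMonodromy a b p (j + 1) 0 0 := by
    have h_mul := monodromy_sub_one_eq (a := a) (b := b) hp (j + 1)
    rw [add_sub_cancel_right] at h_mul
    rw [h_mul, mul_lamMat_apply_one, C_neg, neg_mul]
  rw [h_entry, degree_C_mul (neg_ne_zero.2 (inv_ne_zero (ha0 _)))]
  exact (degree_tMat_zero_zero_and_degree_tMat_one_zero_lt _ (fun n => ha0 _) _).1

lemma gradientSpan_le_degreeLE : gradientSpan a b p ≤ degreeLE ℝ p := by
  have h_entry (j : ℤ) (i c : Fin 2) : monodromy a b p j i c ∈ degreeLE ℝ p :=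
    mem_degreeLE.2 (natDegree_le_iff_degree_le.1 (natDegree_tMat_apply_le _ _ p i c))
  rw [gradientSpan, Submodule.span_le]
  rintro _ (⟨j, rfl⟩ | ⟨j, rfl⟩)
  · exact h_entry j 0 1
  · exact Submodule.sub_mem _ (h_entry j 0 0) (h_entry j 1 1)

lemma monodromy_zero_one_mem (j : ℤ) : monodromy a b p j 0 1 ∈ gradientSpan a b p :=
  Submodule.subset_span (Or.inl ⟨j, rfl⟩)

lemma diagDiff_mem (j : ℤ) : diagDiff a b p j ∈ gradientSpan a b p :=
  Submodule.subset_span (Or.inr ⟨j, rfl⟩)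

lemma C_mul_mem_gradientSpan (c : ℝ) {f : ℝ[X]} (hf : f ∈ gradientSpan a b p) :
    C c * f ∈ gradientSpan a b p :=
  smul_eq_C_mul (p := f) c ▸ Submodule.smul_mem _ c hf

lemma monodromy_one_zero_mem (ha : Function.Periodic a p) (hb : Function.Periodic b p)
    (hp : 0 < p) (j : ℤ) : monodromy a b p j 1 0 ∈ gradientSpan a b p := by
  rw [monodromy_one_zero ha hb hp, ← C_pow]
  exact Submodule.neg_mem _ (C_mul_mem_gradientSpan _ (monodromy_zero_one_mem _))

lemma X_mul_monodromy_zero_one_mem (ha : Function.Periodic a p) (hb : Function.Periodic b p)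
    (hp : 0 < p) (j : ℤ) : X * monodromy a b p j 0 1 ∈ gradientSpan a b p := by
  have h_rel := diagDiff_add_diagDiff_sub_one ha hb hp (j + 1)
  rw [add_sub_cancel_right] at h_rel
  have h_two : (C (1 / 2) * 2 : ℝ[X]) = 1 := by rw [← C_ofNat, ← C_mul]; norm_num
  have h_eq : X * monodromy a b p j 0 1 = C (b (j + 1)) * monodromy a b p j 0 1 -
      C (1 / 2) * (diagDiff a b p (j + 1) + diagDiff a b p j) := by
    linear_combination C (1 / 2) * h_rel - (X - C (b (j + 1))) * monodromy a b p j 0 1 * h_two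
  rw [h_eq]
  exact Submodule.sub_mem _ (C_mul_mem_gradientSpan _ (monodromy_zero_one_mem j))
    (C_mul_mem_gradientSpan _ (Submodule.add_mem _ (diagDiff_mem _) (diagDiff_mem j)))

lemma X_mul_diagDiff_add_mem (ha : Function.Periodic a p) (hb : Function.Periodic b p)
    (hp : 0 < p) (j : ℤ) :
    X * diagDiff a b p j + X * (X * monodromy a b p j 0 1) ∈ gradientSpan a b p := by
  have h_rel := sq_mul_monodromy_zero_one ha hb hp (j + 1)
  rw [add_sub_cancel_right] at h_rel
  have h_eq : X * diagDiff a b p j + X * (X * monodromy a b p j 0 1) =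
      C (a (j + 1) ^ 2) * monodromy a b p (j + 1) 0 1 + C (b (j + 1)) * diagDiff a b p j +
        monodromy a b p j 1 0 + C (2 * b (j + 1)) * (X * monodromy a b p j 0 1) -
        C (b (j + 1) ^ 2) * monodromy a b p j 0 1 := by
    simp only [C_pow, C_mul, C_ofNat]
    linear_combination -h_rel
  rw [h_eq]
  refine Submodule.sub_mem _ (Submodule.add_mem _ (Submodule.add_mem _ (Submodule.add_mem _ ?_ ?_)
    (monodromy_one_zero_mem ha hb hp j)) ?_) ?_ <;> apply C_mul_mem_gradientSpan
  · exact monodromy_zero_one_mem _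
  · exact diagDiff_mem j
  · exact X_mul_monodromy_zero_one_mem ha hb hp j
  · exact monodromy_zero_one_mem j

lemma X_mul_diagDiff_sub_mem (ha : Function.Periodic a p) (hb : Function.Periodic b p)
    (hp : 0 < p) (j : ℤ) :
    X * diagDiff a b p j - X * diagDiff a b p (j - 1) ∈ gradientSpan a b p := by
  have h_eq : X * diagDiff a b p j - X * diagDiff a b p (j - 1) =
      C (2 * b j) * (X * monodromy a b p (j - 1) 0 1) -
        C 2 * (X * diagDiff a b p (j - 1) + X * (X * monodromy a b p (j - 1) 0 1)) := by
    simp only [C_mul, C_ofNat]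
    linear_combination X * diagDiff_add_diagDiff_sub_one ha hb hp j
  rw [h_eq]
  exact Submodule.sub_mem _
    (C_mul_mem_gradientSpan _ (X_mul_monodromy_zero_one_mem ha hb hp _))
    (C_mul_mem_gradientSpan _ (X_mul_diagDiff_add_mem ha hb hp _))

lemma X_mul_diagDiff_mem_sup (ha : Function.Periodic a p) (hb : Function.Periodic b p)
    (hp : 0 < p) (j : ℤ) : X * diagDiff a b p j ∈
      gradientSpan a b p ⊔ (Ideal.span {monodromy a b p 0 0 1}).restrictScalars ℝ := by
  have h_step (i : ℤ) := Submodule.mem_sup_left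
    (T := (Ideal.span {monodromy a b p 0 0 1}).restrictScalars ℝ)
    (X_mul_diagDiff_sub_mem ha hb hp i)
  induction j using Int.induction_on with
  | zero =>
    have h_ideal : X * (X * monodromy a b p 0 0 1) ∈ Ideal.span {monodromy a b p 0 0 1} :=
      Ideal.mul_mem_left _ _ (Ideal.mul_mem_left _ _ (Ideal.mem_span_singleton_self _))
    rw [← add_sub_cancel_right (X * diagDiff a b p 0) (X * (X * monodromy a b p 0 0 1))]
    exact Submodule.sub_mem _ (Submodule.mem_sup_left (X_mul_diagDiff_add_mem ha hb hp 0))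
      (Submodule.mem_sup_right h_ideal)
  | succ i ih =>
    have h_succ := h_step (i + 1)
    rw [add_sub_cancel_right] at h_succ
    exact (Submodule.sub_mem_iff_left _ ih).1 h_succ
  | pred i ih => exact (Submodule.sub_mem_iff_right _ ih).1 (h_step _)

lemma X_mul_mem_gradientSpan_sup (ha : Function.Periodic a p) (hb : Function.Periodic b p)
    (hp : 0 < p) :
    ∀ f ∈ gradientSpan a b p ⊔ (Ideal.span {monodromy a b p 0 0 1}).restrictScalars ℝ,
      X * f ∈ gradientSpan a b p ⊔ (Ideal.span {monodromy a b p 0 0 1}).restrictScalars ℝ := by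
  set I : Submodule ℝ ℝ[X] := (Ideal.span {monodromy a b p 0 0 1}).restrictScalars ℝ
  have h_grad : gradientSpan a b p ≤ (gradientSpan a b p ⊔ I).comap (LinearMap.mulLeft ℝ X) := by
    conv_lhs => rw [gradientSpan]
    rw [Submodule.span_le]
    rintro _ (⟨j, rfl⟩ | ⟨j, rfl⟩)
    · exact Submodule.mem_sup_left (X_mul_monodromy_zero_one_mem ha hb hp j)
    · exact X_mul_diagDiff_mem_sup ha hb hp j
  have h_ideal : I ≤ (gradientSpan a b p ⊔ I).comap (LinearMap.mulLeft ℝ X) := fun f hf =>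
    Submodule.mem_sup_right (Ideal.mul_mem_left (Ideal.span {monodromy a b p 0 0 1}) X hf)
  exact fun f hf => sup_le h_grad h_ideal hf

lemma span_monodromy_diagDiff_eq_top (ha0 : ∀ n, a n ≠ 0) (hp : 0 < p) (hgaps : AllGapsOpen a b p) :
    Ideal.span {monodromy a b p 0 0 1, monodromy a b p 0 1 0, diagDiff a b p 0} = ⊤ := by
  refine ideal_eq_top_of_forall_exists_aeval_ne_zero ℂ fun z => ?_
  by_contra! h_zero
  have h01 := h_zero _ (Ideal.subset_span (by simp : monodromy a b p 0 0 1 ∈ _))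
  have h10 := h_zero _ (Ideal.subset_span (by simp : monodromy a b p 0 1 0 ∈ _))
  have h_diag := h_zero _ (Ideal.subset_span (by simp : diagDiff a b p 0 ∈ _))
  rw [diagDiff] at h_diag
  rw [monodromy_zero] at h01 h10 h_diag
  obtain ⟨x, rfl⟩ : ∃ x : ℝ, (x : ℂ) = z :=
    ⟨z.re, Complex.ext rfl (im_eq_zero_of_aeval_tMat_one_zero b ha0 hp.ne' h10).symm⟩
  have h_real {f : ℝ[X]} (hf : aeval (x : ℂ) f = 0) : f.eval x = 0 := by
    simpa using (aeval_algebraMap_apply ℂ x f).symm.trans hf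
  obtain ⟨h_trace, h_deriv⟩ := eval_trace_of_det_eq_one (det_tMat b ha0 p) (h_real h01)
    (h_real h10) (sub_eq_zero.1 (by simpa using h_real h_diag))
  exact hgaps x h_trace h_deriv

theorem gradientSpan_sup_eq_top (ha : Function.Periodic a p) (hb : Function.Periodic b p)
    (ha0 : ∀ n, a n ≠ 0) (hp : 0 < p) (hgaps : AllGapsOpen a b p) :
    gradientSpan a b p ⊔ (Ideal.span {monodromy a b p 0 0 1}).restrictScalars ℝ = ⊤ := by
  have h_mul := mul_mem_of_forall_X_mul_mem (X_mul_mem_gradientSpan_sup (b := b) ha hb hp)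
  refine eq_top_iff.2 fun f _ => ?_
  obtain ⟨c₁, _, h₁, rfl⟩ := Ideal.mem_span_insert.1
    (span_monodromy_diagDiff_eq_top ha0 hp hgaps ▸ Submodule.mem_top : f ∈ Ideal.span _)
  obtain ⟨c₂, c₃, rfl⟩ := Ideal.mem_span_pair.1 h₁
  exact Submodule.add_mem _ (h_mul c₁ (Submodule.mem_sup_left (monodromy_zero_one_mem 0)))
    (Submodule.add_mem _ (h_mul c₂ (Submodule.mem_sup_left (monodromy_one_zero_mem ha hb hp 0)))
      (h_mul c₃ (Submodule.mem_sup_left (diagDiff_mem 0))))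

theorem gradientSpan_eq_degreeLE (ha : Function.Periodic a p) (hb : Function.Periodic b p)
    (ha0 : ∀ n, a n ≠ 0) (hp : 0 < p) (hgaps : AllGapsOpen a b p) :
    gradientSpan a b p = degreeLE ℝ p := by
  refine le_antisymm gradientSpan_le_degreeLE fun f hf => ?_
  obtain ⟨v, hv, _, hu, rfl⟩ := Submodule.mem_sup.1
    (gradientSpan_sup_eq_top ha hb ha0 hp hgaps ▸ Submodule.mem_top : f ∈ _)
  obtain ⟨g, rfl⟩ := Ideal.mem_span_singleton'.1 hu
  have h_deg : (g * monodromy a b p 0 0 1).degree ≤ p :=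
    mem_degreeLE.1 ((Submodule.add_mem_iff_right _ (gradientSpan_le_degreeLE hv)).1 hf)
  have hg : g.natDegree ≤ 1 := by
    by_contra! h
    have hg0 : g ≠ 0 := by rintro rfl; simp at h
    rw [degree_mul, degree_monodromy_zero_one ha0 hp, degree_eq_natDegree hg0] at h_deg
    norm_cast at h_deg
    omega
  obtain ⟨c, d, rfl⟩ := exists_eq_X_add_C_of_natDegree_le_one hg
  rw [add_mul, mul_assoc]
  exact Submodule.add_mem _ hv (Submodule.add_mem _
    (C_mul_mem_gradientSpan c (X_mul_monodromy_zero_one_mem ha hb hp 0))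
    (C_mul_mem_gradientSpan d (monodromy_zero_one_mem 0)))

end Monodromy

section PeriodicExtension

open Polynomial

/-- The position `(n - 1) mod p` of the integer site `n` within one period, as in `pext`. -/
def site {p : ℕ} (hp : 0 < p) (n : ℤ) : Fin p :=
  ⟨((n - 1) % p).toNat, by
    have := Int.emod_nonneg (n - 1) (Int.natCast_ne_zero.2 hp.ne')
    have := Int.emod_lt_of_pos (n - 1) (Int.natCast_pos.2 hp)
    omega⟩

variable {p : ℕ} (hp : 0 < p)

lemma pext_eq_site (v : Fin p → ℝ) (n : ℤ) : pext v n = v (site hp n) :=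
  dif_pos hp

lemma site_eq_site_iff {m n : ℤ} : site hp m = site hp n ↔ (p : ℤ) ∣ m - n := by
  have hp0 := Int.natCast_ne_zero.2 hp.ne'
  have hm := Int.emod_nonneg (m - 1) hp0
  have hn := Int.emod_nonneg (n - 1) hp0
  calc site hp m = site hp n ↔ (m - 1) % p = (n - 1) % p := by
        rw [site, site, Fin.mk.injEq]; omega
    _ ↔ (p : ℤ) ∣ m - n := by
        rw [Int.emod_eq_emod_iff_emod_sub_eq_zero, sub_sub_sub_cancel_right,
          Int.dvd_iff_emod_eq_zero]

lemma pext_update_site (v : Fin p → ℝ) (n : ℤ) (s : ℝ) :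
    pext (Function.update v (site hp n) s) n = s := by
  rw [pext_eq_site hp, Function.update_self]

lemma pext_update_site_of_not_dvd (v : Fin p → ℝ) {m n : ℤ} (h : ¬(p : ℤ) ∣ m - n) (s : ℝ) :
    pext (Function.update v (site hp n) s) m = pext v m := by
  rw [pext_eq_site hp, pext_eq_site hp, Function.update_of_ne (mt (site_eq_site_iff hp).1 h)]

lemma periodic_pext {p : ℕ} (hp : 0 < p) (v : Fin p → ℝ) :
    Function.Periodic (pext v) p := fun n => by
  rw [pext_eq_site hp, pext_eq_site hp, (site_eq_site_iff hp (m := n + p) (n := n)).2 (by simp)]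

lemma cutMonodromy_pext_update (v w : Fin p → ℝ) (n : ℤ) (s t : ℝ) :
    cutMonodromy (pext (Function.update v (site hp n) s)) (pext (Function.update w (site hp n) t))
      p n = cutMonodromy (pext v) (pext w) p n := by
  refine tMat_congr fun k hk_pos hk_le => ?_
  have h_not_dvd : ¬(p : ℤ) ∣ k + n - n := by
    rw [add_sub_cancel_right]
    exact fun h => absurd (Int.le_of_dvd hk_pos h) (by omega)
  exact ⟨pext_update_site_of_not_dvd hp v h_not_dvd s, pext_update_site_of_not_dvd hp w h_not_dvd t⟩

lemma disc_pext_update (v w : Fin p → ℝ) (n : ℤ) (s t : ℝ) :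
    disc (pext (Function.update v (site hp n) s)) (pext (Function.update w (site hp n) t)) p =
      C s⁻¹ * ((X - C t) * cutMonodromy (pext v) (pext w) p n 0 0 -
        cutMonodromy (pext v) (pext w) p n 1 0) + C s * cutMonodromy (pext v) (pext w) p n 0 1 := by
  rw [← trace_monodromy (periodic_pext hp _) (periodic_pext hp _) hp n,
    monodromy_eq (periodic_pext hp _) (periodic_pext hp _) hp, cutMonodromy_pext_update hp,
    Matrix.trace_fin_two, lamMat_mul_apply_zero, lamMat_mul_apply_one, pext_update_site,
    pext_update_site]

lemma disc_pext_update_left (v w : Fin p → ℝ) (n : ℤ) (hv : pext v n ≠ 0) (s : ℝ) :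
    disc (pext (Function.update v (site hp n) s)) (pext w) p =
      C (pext v n * s⁻¹) * monodromy (pext v) (pext w) p n 0 0 +
        C (s * (pext v n)⁻¹) * monodromy (pext v) (pext w) p n 1 1 := by
  have h_upd := disc_pext_update hp v w n s (pext w n)
  rw [pext_eq_site hp w, Function.update_eq_self, ← pext_eq_site hp w] at h_upd
  have h_inv : (C (pext v n) * C (pext v n)⁻¹ : ℝ[X]) = 1 := by
    rw [← C_mul, mul_inv_cancel₀ hv, C_1]
  rw [h_upd, monodromy_eq (periodic_pext hp v) (periodic_pext hp w) hp, lamMat_mul_apply_zero,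
    lamMat_mul_apply_one, C_mul, C_mul]
  linear_combination (-C s⁻¹ * ((X - C (pext w n)) * cutMonodromy (pext v) (pext w) p n 0 0 -
    cutMonodromy (pext v) (pext w) p n 1 0) - C s * cutMonodromy (pext v) (pext w) p n 0 1) * h_inv

lemma disc_pext_update_right (v w : Fin p → ℝ) (n : ℤ) (t : ℝ) :
    disc (pext v) (pext (Function.update w (site hp n) t)) p = disc (pext v) (pext w) p +
      C (t - pext w n) * monodromy (pext v) (pext w) p (n - 1) 0 1 := by
  have h_upd (r : ℝ) := disc_pext_update hp v w n (pext v n) r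
  simp only [pext_eq_site hp v, Function.update_eq_self] at h_upd
  have h_self := h_upd (pext w n)
  rw [pext_eq_site hp w, Function.update_eq_self, ← pext_eq_site hp w] at h_self
  rw [h_upd, h_self, monodromy_sub_one_eq hp, mul_lamMat_apply_one, pext_eq_site hp v, C_sub]
  ring

end PeriodicExtension

section Derivative

open Polynomial

lemma mem_range_fderiv_of_hasDerivAt {𝕜 E F : Type*} [NontriviallyNormedField 𝕜]
    [NormedAddCommGroup E] [NormedSpace 𝕜 E] [NormedAddCommGroup F] [NormedSpace 𝕜 F]
    {f : E → F} {c : 𝕜 → E} {c' : E} {d : F} {t : 𝕜} (hf : DifferentiableAt 𝕜 f (c t))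
    (hc : HasDerivAt c c' t) (hfc : HasDerivAt (f ∘ c) d t) :
    d ∈ (fderiv 𝕜 f (c t)).range :=
  ⟨c', (hf.hasFDerivAt.comp_hasDerivAt t hc).unique hfc⟩

/-- The vector of the coefficients of degree below `n`, so that `coeffMap p` is `coeffVec (p + 1)`
of the discriminant. -/
def coeffVec (n : ℕ) : ℝ[X] →ₗ[ℝ] Fin n → ℝ :=
  LinearMap.pi fun i => lcoeff ℝ i

lemma coeffMap_eq_coeffVec_disc (p : ℕ) (vw : (Fin p → ℝ) × (Fin p → ℝ)) :
    coeffMap p vw = coeffVec (p + 1) (disc (pext vw.1) (pext vw.2) p) := rfl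

lemma coeffVec_C_mul (n : ℕ) (c : ℝ) (f : ℝ[X]) : coeffVec n (C c * f) = c • coeffVec n f := by
  rw [← smul_eq_C_mul, map_smul]

lemma map_coeffVec_degreeLE (p : ℕ) : (degreeLE ℝ p).map (coeffVec (p + 1)) = ⊤ := by
  refine eq_top_iff.2 fun u _ => ?_
  obtain ⟨f, rfl⟩ := (degreeLTEquiv ℝ (p + 1)).surjective u
  exact ⟨f, degreeLT_succ_eq_degreeLE (R := ℝ) ▸ f.2, rfl⟩

variable {p : ℕ} {v w : Fin p → ℝ}

lemma differentiableAt_coeffMap (hp : 0 < p) (hv : ∀ i, v i ≠ 0) :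
    DifferentiableAt ℝ (coeffMap p) (v, w) := by
  have h_entry (i c : Fin 2) (m : ℕ) : DifferentiableAt ℝ
      (fun vw : (Fin p → ℝ) × (Fin p → ℝ) => (tMat (pext vw.1) (pext vw.2) p i c).coeff m) (v, w) :=
    differentiableAt_coeff_tMat (fun n => by simp only [pext_eq_site hp]; fun_prop)
      (fun n => by simp only [pext_eq_site hp]; fun_prop)
      (fun n => pext_eq_site hp v n ▸ hv _) p i c m
  refine differentiableAt_pi.2 fun m => ?_
  simp only [coeffMap, disc, Matrix.trace_fin_two, coeff_add]
  exact (h_entry 0 0 m).add (h_entry 1 1 m)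

lemma coeffVec_monodromy_mem_range_fderiv (hp : 0 < p) (hv : ∀ i, v i ≠ 0) (j : ℤ) :
    coeffVec (p + 1) (monodromy (pext v) (pext w) p j 0 1) ∈
      (fderiv ℝ (coeffMap p) (v, w)).range := by
  set i := site hp (j + 1)
  have h_base : (v, Function.update w i (w i)) = (v, w) := by rw [Function.update_eq_self]
  rw [← h_base]
  refine mem_range_fderiv_of_hasDerivAt (c := fun t => (v, Function.update w i t))
    (h_base ▸ differentiableAt_coeffMap hp hv)
    ((hasDerivAt_const _ _).prodMk (hasDerivAt_update _ _ _)) ?_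
  have h_curve : (coeffMap p ∘ fun t => (v, Function.update w i t)) = fun t =>
      coeffVec (p + 1) (disc (pext v) (pext w) p) +
        (t - w i) • coeffVec (p + 1) (monodromy (pext v) (pext w) p j 0 1) := by
    funext t
    rw [Function.comp_apply, coeffMap_eq_coeffVec_disc, disc_pext_update_right, map_add,
      coeffVec_C_mul, add_sub_cancel_right, pext_eq_site hp]
  rw [h_curve]
  simpa only [id_eq, one_smul] using (((hasDerivAt_id (w i)).sub_const (w i)).smul_const
    (coeffVec (p + 1) (monodromy (pext v) (pext w) p j 0 1))).const_add _

lemma coeffVec_diagDiff_mem_range_fderiv (hp : 0 < p) (hv : ∀ i, v i ≠ 0) (j : ℤ) :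
    coeffVec (p + 1) (diagDiff (pext v) (pext w) p j) ∈
      (fderiv ℝ (coeffMap p) (v, w)).range := by
  set i := site hp j
  have h_base : (Function.update v i (v i), w) = (v, w) := by rw [Function.update_eq_self]
  suffices h : -(v i)⁻¹ • coeffVec (p + 1) (diagDiff (pext v) (pext w) p j) ∈
      (fderiv ℝ (coeffMap p) (v, w)).range from
    (Submodule.smul_mem_iff _ (neg_ne_zero.2 (inv_ne_zero (hv i)))).1 h
  rw [← h_base]
  refine mem_range_fderiv_of_hasDerivAt (c := fun s => (Function.update v i s, w))
    (h_base ▸ differentiableAt_coeffMap hp hv)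
    ((hasDerivAt_update _ _ _).prodMk (hasDerivAt_const _ _)) ?_
  have h_curve : (coeffMap p ∘ fun s => (Function.update v i s, w)) = fun s =>
      (v i * s⁻¹) • coeffVec (p + 1) (monodromy (pext v) (pext w) p j 0 0) +
        (s * (v i)⁻¹) • coeffVec (p + 1) (monodromy (pext v) (pext w) p j 1 1) := by
    funext s
    rw [Function.comp_apply, coeffMap_eq_coeffVec_disc, disc_pext_update_left hp v w j
      (pext_eq_site hp v j ▸ hv _), map_add, coeffVec_C_mul, coeffVec_C_mul, pext_eq_site hp]
  rw [h_curve]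
  have h_coeff : v i * -(v i ^ 2)⁻¹ = -(v i)⁻¹ := by have := hv i; field_simp
  refine ((((hasDerivAt_inv (hv i)).const_mul (v i)).smul_const _).add
    (((hasDerivAt_id (v i)).mul_const (v i)⁻¹).smul_const _)).congr_deriv ?_
  rw [h_coeff, diagDiff, map_sub]
  module

end Derivative

theorem statement4_general (p : ℕ) (hp : 0 < p) (v w : Fin p → ℝ) (hv : ∀ j, v j ≠ 0)
    (hgaps : AllGapsOpen (pext v) (pext w) p) :
    Function.Surjective (fderiv ℝ (coeffMap p) (v, w)) := by
  have h_span : gradientSpan (pext v) (pext w) p = Polynomial.degreeLE ℝ p :=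
    gradientSpan_eq_degreeLE (periodic_pext hp v) (periodic_pext hp w)
      (fun n => pext_eq_site hp v n ▸ hv _) hp hgaps
  have h_grad : (gradientSpan (pext v) (pext w) p).map (coeffVec (p + 1)) ≤
      (fderiv ℝ (coeffMap p) (v, w)).range := by
    rw [gradientSpan, Submodule.map_span_le]
    rintro _ (⟨j, rfl⟩ | ⟨j, rfl⟩)
    · exact coeffVec_monodromy_mem_range_fderiv hp hv j
    · exact coeffVec_diagDiff_mem_range_fderiv hp hv j
  rw [h_span, map_coeffVec_degreeLE] at h_grad
  exact LinearMap.range_eq_top.1 (top_le_iff.1 h_grad)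

/-- when all gaps are open, at every point of the isospectral torus
the derivative of the coefficient map of the discriminant is surjective onto
`ℝ^{p+1}` (the gradients of the coefficients span the normal space). -/
theorem statement4 (p : ℕ) (hp : 0 < p)
    (a0 b0 : ℤ → ℝ) (ha0pos : ∀ n, 0 < a0 n)
    (hpera : Function.Periodic a0 (p : ℤ)) (hperb : Function.Periodic b0 (p : ℤ))
    (hgaps : AllGapsOpen a0 b0 p)
    (v w : Fin p → ℝ) (hv : ∀ j, 0 < v j)
    (htorus : InTorus p a0 b0 (pext v) (pext w)) :
    Function.Surjective (fderiv ℝ (coeffMap p) (v, w)) := by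
  refine statement4_general p hp v w (fun j => (hv j).ne') ?_
  rwa [AllGapsOpen, htorus.2.2.2]
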